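/- If $\mathcal{F}$ and $\mathcal{G}$ are regular subsets of $[\mathbb{N}]^{<\omega}$ with Cantor–Bendixson indices $\alpha+1$ and $\beta+1$ respectively, then $\mathcal{F}[\mathcal{G}]$ is regular with Cantor–Bendixson index $\beta\alpha + 1$. -/

import Mathlib

/-- The indicator of a finite set of naturals, as a point of the Cantor space `ℕ → Bool`. -/
def finsetInd (E : Finset ℕ) : ℕ → Bool := fun n => decide (n ∈ E)

/-- A family of finite subsets of `ℕ`, viewed as a subset of the Cantor space. -/
def famTop (F : Set (Finset ℕ)) : Set (ℕ → Bool) := finsetInd '' F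

/-- A family is hereditary if it is closed under subsets. -/
def Hereditary (F : Set (Finset ℕ)) : Prop := ∀ E ∈ F, ∀ G ⊆ E, G ∈ F

/-- `G` is a spread of `E` if they have the same cardinality and the `i`-th element of `G`
(in increasing order) is at least the `i`-th element of `E`. -/
def IsSpreadOf (G E : Finset ℕ) : Prop :=
  ∃ h : G.card = E.card, ∀ i : Fin E.card,
    ((E.orderIsoOfFin rfl) i).1 ≤ ((G.orderIsoOfFin h) i).1

/-- A family is spreading if it contains all spreads of its members. -/
def Spreading (F : Set (Finset ℕ)) : Prop := ∀ E ∈ F, ∀ G, IsSpreadOf G E → G ∈ F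

/-- A family is regular if it is hereditary, spreading, and compact in the Cantor space. -/
def RegularFam (F : Set (Finset ℕ)) : Prop :=
  Hereditary F ∧ Spreading F ∧ IsCompact (famTop F)

/-- `E < F` for finite sets: every element of `E` is less than every element of `F`. -/
def FinsetLT (E F : Finset ℕ) : Prop := ∀ a ∈ E, ∀ b ∈ F, a < b

/-- The bracket operation
`F[G] = {∅} ∪ {E₁ ∪ ⋯ ∪ Eₙ : ∅ ≠ Eᵢ ∈ G, E₁ < ⋯ < Eₙ, (min Eᵢ)ᵢ ∈ F}`. -/
def bracketFam (F G : Set (Finset ℕ)) : Set (Finset ℕ) :=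
  {∅} ∪ { E | ∃ (n : ℕ) (_ : 0 < n) (Es : Fin n → Finset ℕ)
      (hne : ∀ i, (Es i).Nonempty),
      (∀ i, Es i ∈ G) ∧ (∀ i j : Fin n, i < j → FinsetLT (Es i) (Es j)) ∧
      (Finset.univ.image fun i => (Es i).min' (hne i)) ∈ F ∧
      E = Finset.univ.biUnion Es }

/-- The Cantor–Bendixson derived family: those `E` whose indicator is an accumulation point
of the family in the Cantor space. -/
def derivFam (F : Set (Finset ℕ)) : Set (Finset ℕ) :=
  { E | finsetInd E ∈ derivedSet (famTop F) }

/-- Transfinite iteration of the Cantor–Bendixson derived set. -/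
noncomputable def CBderiv (A : Set (ℕ → Bool)) (o : Ordinal) : Set (ℕ → Bool) :=
  Ordinal.limitRecOn o A (fun _ S => derivedSet S)
    (fun o _ ih => ⋂ b : { b : Ordinal // b < o }, ih b.1 b.2)

/-- The Cantor–Bendixson index: the least ordinal `η` with `A⁽ᵉᵗᵃ⁾ = ∅`. -/
noncomputable def CBindex (A : Set (ℕ → Bool)) : Ordinal :=
  sInf { o | CBderiv A o = ∅ }

/-- The Cantor–Bendixson index of a family of finite subsets of `ℕ`. -/
noncomputable def CBfam (F : Set (Finset ℕ)) : Ordinal := CBindex (famTop F)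

/-- The `o`-th Cantor–Bendixson derived family. -/
noncomputable def derivFamIter (F : Set (Finset ℕ)) (o : Ordinal) : Set (Finset ℕ) :=
  { E | finsetInd E ∈ CBderiv (famTop F) o }

/-!
A family that is closed under subsets and spreads is compact exactly when its tree under end
extension is well-founded, and the stage at which the Cantor–Bendixson derivation removes `E` is
then the rank of `E` in this tree plus one; so the index of the family is the rank of `∅` plus one.

To compute the rank of `∅` in `F[G]`, decompose each `E` greedily, running through it in increasing
order and opening a new block only when the current one cannot be extended within `G`. Its minima
form a spread of a subset of the minima of any other decomposition of `E`, or of any decomposition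
of a set of which `E` is a spread, so it alone decides whether `E ∈ F[G]`. With `M` the set of its
minima, `L ≠ ∅` its last block and `β` the rank of `∅` in `G`, the rank of `E` in `F[G]` is
`β * rank M + rank L`: extending the last block uses up rank in `G`, and each new block uses up
rank in `F` while renewing the budget `β` in `G`.
-/

open scoped Finset

/-! ### Sub-spreads -/

section CountingBelow

variable {α : Type*} [LinearOrder α] {A : Finset α} {a k : α}

theorem card_filter_lt_insert (ha : a ∉ A) (k : α) :
    #{x ∈ insert a A | x < k} = #{x ∈ A | x < k} + if a < k then 1 else 0 := by
  rw [Finset.filter_insert]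
  split_ifs
  · exact Finset.card_insert_of_notMem fun h => ha (Finset.mem_of_mem_filter a h)
  · rfl

theorem card_filter_lt_of_forall_lt (h : ∀ x ∈ A, x < k) : #{x ∈ A | x < k} = #A := by
  rw [Finset.filter_true_of_mem h]

theorem orderEmbOfFin_lt_iff (A : Finset α) {n : ℕ} (h : #A = n) (i : Fin n) (k : α) :
    A.orderEmbOfFin h i < k ↔ i < #{x ∈ A | x < k} := by
  have card_eq : #{x ∈ A | x < k} = #{j | A.orderEmbOfFin h j < k} := by
    conv_lhs => rw [← A.map_orderEmbOfFin_univ h, Finset.filter_map, Finset.card_map]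
    rfl
  rw [card_eq]
  constructor
  · intro hi
    have Iic_subset : Finset.Iic i ⊆ ({j | A.orderEmbOfFin h j < k} : Finset (Fin n)) :=
      fun j hj => Finset.mem_filter_univ j |>.2
        (((A.orderEmbOfFin h).monotone (Finset.mem_Iic.1 hj)).trans_lt hi)
    simpa [Nat.succ_le_iff] using Finset.card_le_card Iic_subset
  · contrapose!
    intro hi
    have subset_Iio : ({j | A.orderEmbOfFin h j < k} : Finset (Fin n)) ⊆ Finset.Iio i :=
      fun j hj => Finset.mem_Iio.2
        ((A.orderEmbOfFin h).lt_iff_lt.1 ((Finset.mem_filter_univ j |>.1 hj).trans_le hi))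
    simpa using Finset.card_le_card subset_Iio

end CountingBelow

/-- `m` is strictly larger than every element of `E`. -/
def IsAbove (m : ℕ) (E : Finset ℕ) : Prop := ∀ x ∈ E, x < m

namespace IsAbove

variable {A B : Finset ℕ} {m n : ℕ}

theorem notMem (h : IsAbove m A) : m ∉ A := fun hm => (h m hm).false

theorem anti (h : IsAbove m B) (hAB : A ⊆ B) : IsAbove m A := fun x hx => h x (hAB hx)

theorem mono (h : IsAbove m A) (hmn : m ≤ n) : IsAbove n A := fun x hx => (h x hx).trans_le hmn

theorem insert (h : IsAbove m A) (hmn : m < n) : IsAbove n (insert m A) :=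
  Finset.forall_mem_insert _ _ _ |>.2 ⟨hmn, h.mono hmn.le⟩

end IsAbove

theorem eventually_isAbove (E : Finset ℕ) : ∀ᶠ m in Filter.atTop, IsAbove m E :=
  (Filter.eventually_all_finset E).2 fun x _ => Filter.eventually_gt_atTop x

/-- `A` is a spread of a subset of `B`, expressed by counting: below every threshold, `A` has at
most as many elements as `B`. -/
def SubSpread (A B : Finset ℕ) : Prop := ∀ k, #{x ∈ A | x < k} ≤ #{x ∈ B | x < k}

namespace SubSpread

variable {A B C : Finset ℕ} {a b : ℕ}

theorem refl (A : Finset ℕ) : SubSpread A A := fun _ => le_rfl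

theorem trans (hAB : SubSpread A B) (hBC : SubSpread B C) : SubSpread A C :=
  fun k => (hAB k).trans (hBC k)

theorem of_subset (h : A ⊆ B) : SubSpread A B :=
  fun _ => Finset.card_le_card (Finset.filter_subset_filter _ h)

theorem card_le (h : SubSpread A B) : #A ≤ #B := by
  obtain ⟨m, hm⟩ := (eventually_isAbove A).exists
  calc #A = #{x ∈ A | x < m} := (card_filter_lt_of_forall_lt hm).symm
    _ ≤ #{x ∈ B | x < m} := h m
    _ ≤ #B := Finset.card_filter_le _ _

theorem insert (h : SubSpread A B) (ha : a ∉ A) (hb : b ∉ B) (hba : b ≤ a) :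
    SubSpread (insert a A) (insert b B) := by
  intro k
  rw [card_filter_lt_insert ha, card_filter_lt_insert hb]
  have := h k
  split_ifs <;> omega

theorem singleton (hba : b ≤ a) : SubSpread {a} {b} := by
  simpa using (refl ∅).insert (Finset.notMem_empty a) (Finset.notMem_empty b) hba

theorem insert_left (h : SubSpread A B) (ha : a ∉ A) (haB : IsAbove a B) (hcard : #A < #B) :
    SubSpread (Insert.insert a A) B := by
  intro k
  rw [card_filter_lt_insert ha]
  split_ifs with hak
  · rw [card_filter_lt_of_forall_lt (haB.mono hak.le)]
    exact (Nat.succ_le_succ (Finset.card_filter_le _ _)).trans hcard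
  · exact h k

theorem of_insert_right (h : SubSpread A (Insert.insert b B)) (hb : IsAbove b B)
    (hcard : #A ≤ #B) : SubSpread A B := by
  intro k
  by_cases hbk : b < k
  · rw [card_filter_lt_of_forall_lt (hb.mono hbk.le)]
    exact (Finset.card_filter_le _ _).trans hcard
  · simpa [card_filter_lt_insert hb.notMem, hbk] using h k

theorem le_of_insert_insert (h : SubSpread (Insert.insert a A) (Insert.insert b B))
    (ha : IsAbove a A) (hb : IsAbove b B) (hcard : #B ≤ #A) : b ≤ a := by
  by_contra! hab
  have hcount := h (a + 1)
  rw [card_filter_lt_of_forall_lt (ha.insert a.lt_succ_self),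
    Finset.card_insert_of_notMem ha.notMem, card_filter_lt_insert hb.notMem,
    if_neg (by omega)] at hcount
  have := Finset.card_filter_le B (· < a + 1)
  omega

theorem of_insert_insert (h : SubSpread (Insert.insert a A) (Insert.insert b B))
    (ha : a ∉ A) (hb : IsAbove b B) : SubSpread A B := by
  refine ((of_subset (Finset.subset_insert a A)).trans h).of_insert_right hb ?_
  simpa [ha, hb.notMem] using h.card_le

theorem insert_cases (h : SubSpread A (Insert.insert b B)) (hb : IsAbove b B) :
    SubSpread A B ∨
      ∃ a A', IsAbove a A' ∧ A = Insert.insert a A' ∧ SubSpread A' B ∧ b ≤ a := by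
  refine (le_or_gt #A #B).imp (h.of_insert_right hb) fun hcard => ?_
  induction A using Finset.induction_on_max with
  | empty => simp at hcard
  | insert a A' ha _ =>
    have ha : IsAbove a A' := ha
    rw [Finset.card_insert_of_notMem ha.notMem] at hcard
    exact ⟨a, A', ha, rfl, h.of_insert_insert ha.notMem hb,
      h.le_of_insert_insert ha hb (Nat.le_of_lt_succ hcard)⟩

theorem exists_subset_card_eq (h : SubSpread A B) : ∃ C ⊆ B, #A = #C ∧ SubSpread A C := by
  induction B using Finset.induction_on_max with
  | empty => exact ⟨∅, subset_rfl, le_antisymm h.card_le (by simp), h⟩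
  | insert b B hb ih =>
    rcases h.card_le.eq_or_lt with hcard | hcard
    · exact ⟨_, subset_rfl, hcard, h⟩
    · rw [Finset.card_insert_of_notMem (IsAbove.notMem hb)] at hcard
      obtain ⟨C, hCB, hC⟩ := ih (h.of_insert_right hb (Nat.le_of_lt_succ hcard))
      exact ⟨C, hCB.trans (Finset.subset_insert b B), hC⟩

end SubSpread

theorem isSpreadOf_iff {A B : Finset ℕ} : IsSpreadOf A B ↔ #A = #B ∧ SubSpread A B := by
  simp only [IsSpreadOf, Finset.coe_orderIsoOfFin_apply]
  constructor
  · rintro ⟨hcard, hle⟩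
    refine ⟨hcard, fun k => ?_⟩
    by_contra! hlt
    have hB : #{x ∈ B | x < k} < #B := hlt.trans_le ((Finset.card_filter_le _ _).trans hcard.le)
    have hAk := (orderEmbOfFin_lt_iff A hcard ⟨_, hB⟩ k).2 hlt
    exact ((orderEmbOfFin_lt_iff B rfl ⟨_, hB⟩ k).1 ((hle _).trans_lt hAk)).false
  · rintro ⟨hcard, hAB⟩
    refine ⟨hcard, fun i => Nat.lt_succ_iff.1 ?_⟩
    rw [orderEmbOfFin_lt_iff]
    exact ((orderEmbOfFin_lt_iff A hcard i _).1 (Nat.lt_succ_self _)).trans_le (hAB _)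

/-- Closure under `SubSpread`, which merges hereditary and spreading into one condition. -/
def SubSpreadClosed (F : Set (Finset ℕ)) : Prop := ∀ B ∈ F, ∀ A, SubSpread A B → A ∈ F

theorem subSpreadClosed_iff {F : Set (Finset ℕ)} :
    SubSpreadClosed F ↔ Hereditary F ∧ Spreading F := by
  constructor
  · intro hF
    exact ⟨fun E hE A hA => hF E hE A (.of_subset hA),
      fun E hE A hA => hF E hE A (isSpreadOf_iff.1 hA).2⟩
  · rintro ⟨hered, spread⟩ B hB A hAB
    obtain ⟨C, hCB, hcard, hAC⟩ := hAB.exists_subset_card_eq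
    exact spread C (hered B hB C hCB) A (isSpreadOf_iff.2 ⟨hcard, hAC⟩)

namespace SubSpreadClosed

variable {F : Set (Finset ℕ)} {A B : Finset ℕ}

theorem mem_of_subset (hF : SubSpreadClosed F) (hB : B ∈ F) (hAB : A ⊆ B) : A ∈ F :=
  hF B hB A (.of_subset hAB)

theorem hereditary (hF : SubSpreadClosed F) : Hereditary F := fun _ hB _ => hF.mem_of_subset hB

theorem insert_mem_of_le (hF : SubSpreadClosed F) {m n : ℕ} (hm : IsAbove m A)
    (hmem : insert m A ∈ F) (hmn : m ≤ n) : insert n A ∈ F :=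
  hF _ hmem _ ((SubSpread.refl A).insert (hm.mono hmn).notMem hm.notMem hmn)

theorem singleton_mem_of_subSpread (hF : SubSpreadClosed F) (hAB : SubSpread A B)
    (hB : ∀ x ∈ B, {x} ∈ F) : ∀ x ∈ A, {x} ∈ F := by
  intro x hx
  have hpos : 0 < #{y ∈ B | y < x + 1} :=
    (Finset.card_pos.2 ⟨x, by simp [hx]⟩).trans_le (hAB (x + 1))
  obtain ⟨y, hy⟩ := Finset.card_pos.1 hpos
  obtain ⟨hyB, hyx⟩ := Finset.mem_filter.1 hy
  exact hF _ (hB y hyB) _ (.singleton (Nat.lt_succ_iff.1 hyx))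

end SubSpreadClosed

/-- `E'` is a member of `F` obtained from `E` by adjoining one element above all of `E`. The tree
order of `F` is generated by this relation, oriented so that it can be well-founded. -/
def Extends (F : Set (Finset ℕ)) (E' E : Finset ℕ) : Prop :=
  ∃ m, IsAbove m E ∧ E' = insert m E ∧ E' ∈ F

namespace Extends

variable {F : Set (Finset ℕ)} {E E' : Finset ℕ}

theorem ssubset (h : Extends F E' E) : E ⊂ E' := by
  obtain ⟨m, hm, rfl, -⟩ := h
  exact Finset.ssubset_insert hm.notMem

theorem mem (h : Extends F E' E) : E' ∈ F := h.choose_spec.2.2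

end Extends

/-! ### Compactness and well-foundedness -/

section Topology

variable {F : Set (Finset ℕ)} {E : Finset ℕ}

theorem finsetInd_injective : Function.Injective finsetInd := by
  intro A B h
  ext x
  simpa [finsetInd] using congrFun h x

theorem finsetInd_mem_famTop_iff : finsetInd E ∈ famTop F ↔ E ∈ F :=
  finsetInd_injective.mem_set_image

theorem hasBasis_nhds_cylinder (x : ℕ → Bool) :
    (nhds x).HasBasis (fun _ => True) (PiNat.cylinder x) := by
  refine ⟨fun U => ⟨fun hU => ?_, fun ⟨N, _, hN⟩ => ?_⟩⟩
  · obtain ⟨_, ⟨y, N, rfl⟩, hx, hsub⟩ :=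
      (PiNat.isTopologicalBasis_cylinders fun _ => Bool).mem_nhds_iff.1 hU
    exact ⟨N, trivial, PiNat.mem_cylinder_iff_eq.1 hx ▸ hsub⟩
  · exact Filter.mem_of_superset
      ((PiNat.isOpen_cylinder _ x N).mem_nhds (PiNat.self_mem_cylinder x N)) hN

theorem mem_closure_famTop_iff (hF : Hereditary F) {x : ℕ → Bool} :
    x ∈ closure (famTop F) ↔ ∀ E : Finset ℕ, (∀ i ∈ E, x i = true) → E ∈ F := by
  rw [mem_closure_iff_nhds_basis (hasBasis_nhds_cylinder x)]
  constructor
  · intro h E hE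
    obtain ⟨N, hN⟩ := (eventually_isAbove E).exists
    obtain ⟨_, ⟨B, hB, rfl⟩, hBx⟩ := h N trivial
    refine hF B hB E fun i hi => ?_
    simpa [finsetInd, hE i hi] using hBx i (hN i hi)
  · intro h N _
    refine ⟨finsetInd {i ∈ Finset.range N | x i = true},
      finsetInd_mem_famTop_iff.2 (h _ fun i hi => (Finset.mem_filter.1 hi).2), fun i hi => ?_⟩
    simp [finsetInd, hi]

theorem isCompact_famTop_iff (hF : Hereditary F) :
    IsCompact (famTop F) ↔
      ∀ A : Set ℕ, (∀ E : Finset ℕ, (E : Set ℕ) ⊆ A → E ∈ F) → A.Finite := by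
  constructor
  · intro hcompact A hA
    classical
    have hmem : (fun n => decide (n ∈ A)) ∈ closure (famTop F) :=
      (mem_closure_famTop_iff hF).2 fun E hE => hA E fun i hi => by simpa using hE i hi
    rw [hcompact.isClosed.closure_eq] at hmem
    obtain ⟨E, -, hEA⟩ := hmem
    exact E.finite_toSet.subset fun n hn => by simpa [finsetInd, hn] using congrFun hEA n
  · intro hfin
    refine (isClosed_of_closure_subset fun x hx => ?_).isCompact
    have hmem := (mem_closure_famTop_iff hF).1 hx
    have hsupp : {n | x n = true}.Finite := hfin _ hmem
    refine ⟨hsupp.toFinset, hmem _ fun i hi => by simpa using hi, ?_⟩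
    ext n
    simp [finsetInd]

theorem wellFounded_extends_iff (hF : Hereditary F) :
    WellFounded (Extends F) ↔
      ∀ A : Set ℕ, (∀ E : Finset ℕ, (E : Set ℕ) ⊆ A → E ∈ F) → A.Finite := by
  constructor
  · intro hwf A hA
    by_contra hinf
    suffices ∀ E : Finset ℕ, ¬ (E : Set ℕ) ⊆ A from this ∅ (by simp)
    intro E
    induction E using hwf.induction with
    | _ E ih =>
      intro hEA
      obtain ⟨m, hm, hmA⟩ :=
        (eventually_isAbove E).and_frequently (Nat.frequently_atTop_iff_infinite.2 hinf) |>.exists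
      have hsub : ((insert m E : Finset ℕ) : Set ℕ) ⊆ A := by
        simpa using Set.insert_subset hmA hEA
      exact ih _ ⟨m, hm, rfl, hA _ hsub⟩ hsub
  · refine fun hfin => wellFounded_iff_isEmpty_descending_chain.2 ⟨fun ⟨f, hf⟩ => ?_⟩
    have hmono : Monotone fun n => (f n : Set ℕ) :=
      monotone_nat_of_le_succ fun n => Finset.coe_subset.2 (hf n).ssubset.subset
    have exists_subset {E : Finset ℕ} (hE : (E : Set ℕ) ⊆ ⋃ n, f n) : ∃ n, E ⊆ f n :=
      hmono.directed_le.exists_mem_subset_of_finset_subset_biUnion hE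
    have hunion : (⋃ n, (f n : Set ℕ)).Finite := hfin _ fun E hE => by
      obtain ⟨n, hn⟩ := exists_subset hE
      exact hF _ (hf n).mem _ (hn.trans (hf n).ssubset.subset)
    obtain ⟨n, hn⟩ := exists_subset (E := hunion.toFinset) (by simp)
    refine (hf n).ssubset.not_subset (Finset.Subset.trans ?_ hn)
    intro x hx
    simpa using ⟨n + 1, hx⟩

theorem regularFam_iff :
    RegularFam F ↔ SubSpreadClosed F ∧ IsWellFounded (Finset ℕ) (Extends F) := by
  rw [RegularFam, ← and_assoc, ← subSpreadClosed_iff, isWellFounded_iff]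
  exact and_congr_right fun hF => by
    rw [isCompact_famTop_iff hF.hereditary, wellFounded_extends_iff hF.hereditary]

theorem exists_extends_of_accPt (hF : Hereditary F)
    (h : AccPt (finsetInd E) (.principal (famTop F))) :
    ∃ E', Extends F E' E := by
  obtain ⟨N, hN⟩ := (eventually_isAbove E).exists
  obtain ⟨_, ⟨hBE, B, hB, rfl⟩, hne⟩ :=
    accPt_iff_nhds.1 h _ ((hasBasis_nhds_cylinder _).mem_of_mem (i := N) trivial)
  have mem_iff : ∀ i < N, i ∈ B ↔ i ∈ E := fun i hi => by simpa [finsetInd] using hBE i hi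
  have hEB : E ⊂ B := Finset.ssubset_iff_subset_ne.2
    ⟨fun i hi => (mem_iff i (hN i hi)).2 hi, fun h => hne (h ▸ rfl)⟩
  obtain ⟨m, hmB, hmE⟩ := Finset.exists_of_ssubset hEB
  have hNm : N ≤ m := not_lt.1 fun hlt => hmE ((mem_iff m hlt).1 hmB)
  exact ⟨_, m, hN.mono hNm, rfl, hF B hB _ (Finset.insert_subset hmB hEB.subset)⟩

theorem accPt_of_extends (hF : SubSpreadClosed F) {E' : Finset ℕ} (h : Extends F E' E) :
    AccPt (finsetInd E) (.principal (famTop F)) := by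
  obtain ⟨m, hm, rfl, hmem⟩ := h
  refine accPt_iff_nhds.2 fun U hU => ?_
  obtain ⟨N, -, hN⟩ := (hasBasis_nhds_cylinder _).mem_iff.1 hU
  have habove : IsAbove (max m N) E := hm.mono (le_max_left m N)
  refine ⟨finsetInd (insert (max m N) E), ⟨hN fun i hi => ?_, finsetInd_mem_famTop_iff.2
    (hF.insert_mem_of_le hm hmem (le_max_left m N))⟩, fun heq => ?_⟩
  · have hne : i ≠ max m N := (hi.trans_le (le_max_right m N)).ne
    simp [finsetInd, hne]
  · exact Finset.insert_ne_self.2 habove.notMem (finsetInd_injective heq)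

theorem derivedSet_famTop (hF : RegularFam F) :
    derivedSet (famTop F) = famTop {E | ∃ E', Extends F E' E} := by
  obtain ⟨hered, spread, compact⟩ := hF
  refine Set.Subset.antisymm (fun x hx => ?_) ?_
  · obtain ⟨E, -, rfl⟩ := (isClosed_iff_derivedSet_subset _).1 compact.isClosed hx
    exact finsetInd_mem_famTop_iff.2 (exists_extends_of_accPt hered hx)
  · rintro _ ⟨E, ⟨E', hE'⟩, rfl⟩
    exact accPt_of_extends (subSpreadClosed_iff.2 ⟨hered, spread⟩) hE'

end Topology

/-! ### Ranks and the Cantor–Bendixson index -/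

section Rank

universe u

/-- The rank of `E` in the tree of `F`. For `E ∈ F` it is the last stage of the Cantor–Bendixson
derivation at which `E` is still present. The lift makes it available in every universe of
ordinals. -/
noncomputable def extRank (F : Set (Finset ℕ)) [IsWellFounded (Finset ℕ) (Extends F)]
    (E : Finset ℕ) : Ordinal.{u} :=
  Ordinal.lift.{u} (IsWellFounded.rank (Extends F) E)

variable {F : Set (Finset ℕ)} [IsWellFounded (Finset ℕ) (Extends F)]
  {A B E E' : Finset ℕ} {ξ : Ordinal.{u}}

theorem extRank_lt_of_extends (h : Extends F E' E) : extRank.{u} F E' < extRank F E :=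
  Ordinal.lift_lt.2 (IsWellFounded.rank_lt_of_rel h)

theorem lt_extRank_iff : ξ < extRank F E ↔ ∃ E', Extends F E' E ∧ ξ ≤ extRank F E' := by
  refine ⟨fun h => ?_, fun ⟨E', hE', hξ⟩ => hξ.trans_lt (extRank_lt_of_extends hE')⟩
  obtain ⟨η, hη, rfl⟩ := Ordinal.lt_lift_iff.1 h
  rw [IsWellFounded.rank_eq, Ordinal.lt_iSup_iff] at hη
  obtain ⟨⟨E', hE'⟩, hη⟩ := hη
  exact ⟨E', hE', Ordinal.lift_le.2 (Order.lt_succ_iff.1 hη)⟩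

theorem extRank_anti (hF : SubSpreadClosed F) (h : SubSpread A B) :
    extRank.{u} F B ≤ extRank F A := by
  induction B using IsWellFounded.induction (Extends F) generalizing A with
  | ind B ih =>
    refine le_of_forall_lt fun ξ hξ => ?_
    obtain ⟨_, ⟨m, hm, rfl, hmem⟩, hξ⟩ := lt_extRank_iff.1 hξ
    obtain ⟨n, hn, hmn⟩ := ((eventually_isAbove A).and (Filter.eventually_ge_atTop m)).exists
    have hinsert : SubSpread (insert n A) (insert m B) := h.insert hn.notMem hm.notMem hmn
    exact lt_extRank_iff.2 ⟨_, ⟨n, hn, rfl, hF _ hmem _ hinsert⟩,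
      hξ.trans (ih _ ⟨m, hm, rfl, hmem⟩ hinsert)⟩

theorem eventually_extends (hF : SubSpreadClosed F) (h : ξ < extRank F E) :
    ∀ᶠ m in Filter.atTop, insert m E ∈ F ∧ ξ ≤ extRank F (insert m E) := by
  obtain ⟨_, ⟨n, hn, rfl, hmem⟩, hξ⟩ := lt_extRank_iff.1 h
  filter_upwards [Filter.eventually_ge_atTop n] with m hnm
  have hspread : SubSpread (insert m E) (insert n E) :=
    (SubSpread.refl E).insert (hn.mono hnm).notMem hn.notMem hnm
  exact ⟨hF _ hmem _ hspread, hξ.trans (extRank_anti hF hspread)⟩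

theorem extRank_le {φ : Finset ℕ → Ordinal.{u}} (hφ : ∀ E E', Extends F E' E → φ E' < φ E)
    (E : Finset ℕ) : extRank F E ≤ φ E := by
  induction E using IsWellFounded.induction (Extends F) with
  | ind E ih =>
    refine le_of_forall_lt fun ξ hξ => ?_
    obtain ⟨E', hE', hξ⟩ := lt_extRank_iff.1 hξ
    exact (hξ.trans (ih E' hE')).trans_lt (hφ E E' hE')

theorem le_extRank {φ : Finset ℕ → Ordinal.{u}}
    (hφ : ∀ E ∈ F, ∀ ξ < φ E, ∃ E', Extends F E' E ∧ ξ ≤ φ E') (hE : E ∈ F) :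
    φ E ≤ extRank F E := by
  induction E using IsWellFounded.induction (Extends F) with
  | ind E ih =>
    refine le_of_forall_lt fun ξ hξ => ?_
    obtain ⟨E', hE', hξ⟩ := hφ E hE ξ hξ
    exact lt_extRank_iff.2 ⟨E', hE', hξ.trans (ih E' hE' hE'.mem)⟩

/-- The members of `F` of rank at least `ξ`; this is the `ξ`-th derived family of `F`. -/
def rankGE (F : Set (Finset ℕ)) [IsWellFounded (Finset ℕ) (Extends F)] (ξ : Ordinal.{u}) :
    Set (Finset ℕ) :=
  {E ∈ F | ξ ≤ extRank F E}

theorem regularFam_rankGE (hF : SubSpreadClosed F) (ξ : Ordinal.{u}) :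
    RegularFam (rankGE F ξ) := by
  refine regularFam_iff.2 ⟨fun B hB A hAB => ?_, ⟨?_⟩⟩
  · exact ⟨hF B hB.1 A hAB, hB.2.trans (extRank_anti hF hAB)⟩
  · refine Subrelation.wf (r := Extends F) ?_ IsWellFounded.wf
    rintro _ _ ⟨m, hm, rfl, hmem⟩
    exact ⟨m, hm, rfl, hmem.1⟩

theorem derivedSet_rankGE (hF : SubSpreadClosed F) (ξ : Ordinal.{u}) :
    derivedSet (famTop (rankGE F ξ)) = famTop (rankGE F (ξ + 1)) := by
  rw [derivedSet_famTop (regularFam_rankGE hF ξ)]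
  congr 1
  ext E
  constructor
  · rintro ⟨_, m, hm, rfl, hmem, hξ⟩
    exact ⟨hF.mem_of_subset hmem (Finset.subset_insert m E),
      Order.add_one_le_iff.2 (lt_extRank_iff.2 ⟨_, ⟨m, hm, rfl, hmem⟩, hξ⟩)⟩
  · rintro ⟨-, hξ⟩
    obtain ⟨_, ⟨m, hm, rfl, hmem⟩, hξ⟩ := lt_extRank_iff.1 (Order.add_one_le_iff.1 hξ)
    exact ⟨_, m, hm, rfl, hmem, hξ⟩

theorem iInter_famTop_rankGE (hξ : Order.IsSuccLimit ξ) :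
    ⋂ η : {η // η < ξ}, famTop (rankGE F η.1) = famTop (rankGE F ξ) := by
  have : Nonempty {η // η < ξ} := ⟨⟨0, hξ.bot_lt⟩⟩
  simp only [famTop]
  rw [← finsetInd_injective.injOn.image_iInter_eq]
  congr 1
  ext E
  simp only [rankGE, Set.mem_iInter, Set.mem_sep_iff, hξ.le_iff_forall_le, Subtype.forall]
  exact ⟨fun h => ⟨(h 0 hξ.bot_lt).1, fun η hη => (h η hη).2⟩, fun h η hη => ⟨h.1, h.2 η hη⟩⟩

theorem CBderiv_famTop (hF : SubSpreadClosed F) (ξ : Ordinal.{u}) :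
    CBderiv (famTop F) ξ = famTop (rankGE F ξ) := by
  induction ξ using Ordinal.limitRecOn with
  | zero => simp [CBderiv, rankGE]
  | add_one ξ ih =>
    rw [← derivedSet_rankGE hF, ← ih, CBderiv, Ordinal.limitRecOn_add_one, CBderiv]
  | limit ξ hξ ih =>
    rw [← iInter_famTop_rankGE hξ, CBderiv, Ordinal.limitRecOn_limit (h := hξ)]
    exact Set.iInter_congr fun η => ih η.1 η.2

theorem CBfam_eq (hF : SubSpreadClosed F) (hempty : ∅ ∈ F) :
    CBfam.{u} F = extRank F ∅ + 1 := by
  have eq_empty_iff (ξ : Ordinal.{u}) : CBderiv (famTop F) ξ = ∅ ↔ extRank F ∅ + 1 ≤ ξ := by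
    rw [CBderiv_famTop hF, famTop, Set.image_eq_empty, Order.add_one_le_iff, ← not_le,
      Set.eq_empty_iff_forall_notMem]
    refine ⟨fun h hξ => h ∅ ⟨hempty, hξ⟩, fun h E hE => h (hE.2.trans ?_)⟩
    exact extRank_anti hF (.of_subset (Finset.empty_subset E))
  simp only [CBfam, CBindex, eq_empty_iff]
  exact csInf_Ici

end Rank

theorem empty_mem_of_CBfam_ne_zero {F : Set (Finset ℕ)} (hF : Hereditary F)
    (h : CBfam F ≠ 0) : ∅ ∈ F := by
  obtain ⟨E, hE⟩ : F.Nonempty := by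
    by_contra! hempty
    refine h (le_antisymm (csInf_le' ?_) bot_le)
    simp [CBderiv, famTop, hempty]
  exact hF E hE ∅ (Finset.empty_subset E)

/-! ### Block decompositions -/

/-- What has to be remembered of a decomposition into successive blocks while elements are added
from below: the set of minima of the blocks, and the last block. -/
structure BlockData where
  minima : Finset ℕ
  last : Finset ℕ

namespace BlockData

/-- The elements of `E` mentioned by the data of a decomposition of `E`. -/
def support (d : BlockData) : Finset ℕ := d.minima ∪ d.last

/-- Adjoin `m` to the last block. -/
def extend (d : BlockData) (m : ℕ) : BlockData := ⟨d.minima, insert m d.last⟩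

/-- Open a new block starting with `m`. -/
def startNew (d : BlockData) (m : ℕ) : BlockData := ⟨insert m d.minima, {m}⟩

end BlockData

/-- `IsDecomp G E d`: `E` is a union of successive nonempty blocks from `G` whose set of minima and
last block are given by `d`. -/
inductive IsDecomp (G : Set (Finset ℕ)) : Finset ℕ → BlockData → Prop
  | empty : IsDecomp G ∅ ⟨∅, ∅⟩
  | append {E P : Finset ℕ} {d : BlockData} (h : IsDecomp G E d) (hP : P.Nonempty) (hPG : P ∈ G)
      (hEP : FinsetLT E P) : IsDecomp G (E ∪ P) ⟨insert (P.min' hP) d.minima, P⟩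

theorem min'_insert_of_isAbove {P : Finset ℕ} {m : ℕ} (hP : P.Nonempty) (hm : IsAbove m P) :
    (insert m P).min' (Finset.insert_nonempty m P) = P.min' hP := by
  rw [Finset.min'_insert m P hP, min_eq_right (hm _ (P.min'_mem hP)).le]

namespace IsDecomp

variable {G : Set (Finset ℕ)} {E : Finset ℕ} {d : BlockData} {m : ℕ}

theorem support_subset (h : IsDecomp G E d) : d.support ⊆ E := by
  induction h with
  | empty => simp [BlockData.support]
  | @append E P d _ hP _ _ ih =>
    have hmin := P.min'_mem hP
    have hM : d.minima ⊆ E := Finset.subset_union_left.trans ih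
    simp only [BlockData.support]
    grind

theorem singleton_mem (hG : Hereditary G) (h : IsDecomp G E d) : ∀ x ∈ E, {x} ∈ G := by
  induction h with
  | empty => simp
  | @append E P _ _ _ hPG _ ih =>
    intro x hx
    exact (Finset.mem_union.1 hx).elim (ih x) fun hxP => hG P hPG _ (by simpa using hxP)

theorem startNew (h : IsDecomp G E d) (hm : IsAbove m E) (hmG : {m} ∈ G) :
    IsDecomp G (insert m E) (d.startNew m) := by
  have happend := h.append (Finset.singleton_nonempty m) hmG (by simpa [FinsetLT, IsAbove] using hm)
  rwa [Finset.min'_singleton, Finset.union_singleton] at happend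

theorem extend (h : IsDecomp G E d) (hm : IsAbove m E) (hne : d.last.Nonempty)
    (hmG : insert m d.last ∈ G) : IsDecomp G (insert m E) (d.extend m) := by
  cases h with
  | empty => simp at hne
  | @append E P d h hP hPG hEP =>
    have hEmP : FinsetLT E (insert m P) := fun x hx =>
      Finset.forall_mem_insert _ _ _ |>.2 ⟨hm x (Finset.mem_union_left P hx), hEP x hx⟩
    have happend := h.append (Finset.insert_nonempty m P) hmG hEmP
    rwa [min'_insert_of_isAbove hP (hm.anti Finset.subset_union_right),
      Finset.union_insert] at happend

end IsDecomp

section FinSucc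

variable {α : Type*} [DecidableEq α] {n : ℕ}

theorem biUnion_univ_castSucc (f : Fin (n + 1) → Finset α) :
    Finset.univ.biUnion f = (Finset.univ.biUnion fun i : Fin n => f i.castSucc) ∪
      f (Fin.last n) := by
  ext x
  simp [Fin.exists_fin_succ']

theorem image_univ_castSucc (f : Fin (n + 1) → α) :
    Finset.univ.image f =
      insert (f (Fin.last n)) (Finset.univ.image fun i : Fin n => f i.castSucc) := by
  ext x
  simp [Fin.exists_fin_succ', or_comm, eq_comm]

end FinSucc

theorem exists_isDecomp_biUnion {G : Set (Finset ℕ)} {n : ℕ} (Es : Fin n → Finset ℕ)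
    (hne : ∀ i, (Es i).Nonempty) (hG : ∀ i, Es i ∈ G)
    (hlt : ∀ i j, i < j → FinsetLT (Es i) (Es j)) :
    ∃ d, IsDecomp G (Finset.univ.biUnion Es) d ∧
      d.minima = Finset.univ.image fun i => (Es i).min' (hne i) := by
  induction n with
  | zero => exact ⟨_, .empty, rfl⟩
  | succ n ih =>
    obtain ⟨d, hd, hmin⟩ := ih (fun i => Es i.castSucc) (fun i => hne _) (fun i => hG _)
      fun i j hij => hlt _ _ (Fin.castSucc_lt_castSucc_iff.2 hij)
    have hlast :
        FinsetLT (Finset.univ.biUnion fun i : Fin n => Es i.castSucc) (Es (Fin.last n)) := by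
      intro x hx
      obtain ⟨i, -, hi⟩ := Finset.mem_biUnion.1 hx
      exact hlt _ _ (Fin.castSucc_lt_last i) x hi
    rw [biUnion_univ_castSucc, image_univ_castSucc, ← hmin]
    exact ⟨_, hd.append (hne _) (hG _) hlast, rfl⟩

theorem IsDecomp.exists_eq_biUnion {G : Set (Finset ℕ)} {E : Finset ℕ} {d : BlockData}
    (h : IsDecomp G E d) :
    ∃ (n : ℕ) (Es : Fin n → Finset ℕ) (hne : ∀ i, (Es i).Nonempty), (∀ i, Es i ∈ G) ∧
      (∀ i j, i < j → FinsetLT (Es i) (Es j)) ∧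
      (Finset.univ.image fun i => (Es i).min' (hne i)) = d.minima ∧
      E = Finset.univ.biUnion Es := by
  induction h with
  | empty => exact ⟨0, Fin.elim0, fun i => i.elim0, by simp⟩
  | @append E P d h hP hPG hEP ih =>
    obtain ⟨n, Es, hne, hG, hlt, hmin, rfl⟩ := ih
    have hEsP (i : Fin n) : FinsetLT (Es i) P := fun x hx =>
      hEP x (Finset.mem_biUnion.2 ⟨i, Finset.mem_univ i, hx⟩)
    refine ⟨n + 1, Fin.snoc Es P, ?_, ?_, ?_, ?_, ?_⟩
    · simpa [Fin.forall_fin_succ'] using ⟨hne, hP⟩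
    · simpa [Fin.forall_fin_succ'] using ⟨hG, hPG⟩
    · simpa [Fin.forall_fin_succ', (Fin.castSucc_lt_last _).not_gt] using
        fun i => ⟨hlt i, hEsP i⟩
    · simp [image_univ_castSucc, hmin]
    · simp [biUnion_univ_castSucc]

theorem mem_bracketFam_iff_exists_isDecomp {F G : Set (Finset ℕ)} (hempty : ∅ ∈ F)
    {E : Finset ℕ} : E ∈ bracketFam F G ↔ ∃ d, IsDecomp G E d ∧ d.minima ∈ F := by
  constructor
  · rintro (rfl | ⟨n, -, Es, hne, hG, hlt, hmin, rfl⟩)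
    · exact ⟨_, .empty, hempty⟩
    · obtain ⟨d, hd, hd_min⟩ := exists_isDecomp_biUnion Es hne hG hlt
      exact ⟨d, hd, hd_min ▸ hmin⟩
  · rintro ⟨d, hd, hmin⟩
    obtain ⟨n, Es, hne, hG, hlt, hd_min, rfl⟩ := hd.exists_eq_biUnion
    rcases n.eq_zero_or_pos with rfl | hn
    · exact .inl rfl
    · exact .inr ⟨n, hn, Es, hne, hG, hlt, hd_min ▸ hmin, rfl⟩

/-! ### The greedy decomposition -/

open Classical in
/-- Treat the next element `m` greedily: extend the last block if the result is still in `G`. -/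
noncomputable def greedyStep (G : Set (Finset ℕ)) (m : ℕ) (d : BlockData) : BlockData :=
  if d.last.Nonempty ∧ insert m d.last ∈ G then d.extend m else d.startNew m

theorem greedyStep_cases (G : Set (Finset ℕ)) (m : ℕ) (d : BlockData) :
    (d.last.Nonempty ∧ insert m d.last ∈ G ∧ greedyStep G m d = d.extend m) ∨
      ((d.last.Nonempty → insert m d.last ∉ G) ∧ greedyStep G m d = d.startNew m) := by
  unfold greedyStep
  split_ifs with h
  · exact .inl ⟨h.1, h.2, rfl⟩
  · exact .inr ⟨not_and.1 h, rfl⟩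

/-- The decomposition obtained by running through `E` in increasing order and opening a new block
only when forced to. -/
noncomputable def greedy (G : Set (Finset ℕ)) (E : Finset ℕ) : BlockData :=
  (E.sort (· ≥ ·)).foldr (greedyStep G) ⟨∅, ∅⟩

section Greedy

variable {G : Set (Finset ℕ)} {E : Finset ℕ} {m : ℕ}

theorem greedy_empty (G : Set (Finset ℕ)) : greedy G ∅ = ⟨∅, ∅⟩ := by
  simp [greedy]

theorem greedy_insert (hm : IsAbove m E) :
    greedy G (insert m E) = greedyStep G m (greedy G E) := by
  rw [greedy, Finset.sort_insert (· ≥ ·) (fun x hx => (hm x hx).le) hm.notMem, List.foldr_cons,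
    greedy]

theorem support_greedy_subset (G : Set (Finset ℕ)) (E : Finset ℕ) :
    (greedy G E).support ⊆ E := by
  induction E using Finset.induction_on_max with
  | empty => simp [greedy_empty, BlockData.support]
  | insert m E hm ih =>
    rw [greedy_insert hm]
    obtain ⟨-, -, h⟩ | ⟨-, h⟩ := greedyStep_cases G m (greedy G E) <;> rw [h] <;>
      simp only [BlockData.support, BlockData.extend, BlockData.startNew] at ih ⊢ <;> grind

theorem greedy_last_nonempty (hE : E.Nonempty) : (greedy G E).last.Nonempty := by
  induction E using Finset.induction_on_max with
  | empty => simp at hE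
  | insert m E hm _ =>
    rw [greedy_insert hm]
    obtain ⟨-, -, h⟩ | ⟨-, h⟩ := greedyStep_cases G m (greedy G E) <;> rw [h]
    · exact Finset.insert_nonempty _ _
    · exact Finset.singleton_nonempty m

theorem isDecomp_greedy (hE : ∀ x ∈ E, {x} ∈ G) : IsDecomp G E (greedy G E) := by
  induction E using Finset.induction_on_max with
  | empty => exact greedy_empty G ▸ .empty
  | insert m E hm ih =>
    have hdecomp := ih fun x hx => hE x (Finset.mem_insert_of_mem hx)
    rw [greedy_insert hm]
    obtain ⟨hne, hmem, h⟩ | ⟨-, h⟩ := greedyStep_cases G m (greedy G E) <;> rw [h]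
    · exact hdecomp.extend hm hne hmem
    · exact hdecomp.startNew hm (hE m (Finset.mem_insert_self m E))

end Greedy

/-! ### Optimality of the greedy decomposition -/

/-- `d'` uses fewer or later blocks than `d`: its minima form a sub-spread of those of `d` and, if
both have equally many blocks, its last block is a sub-spread of that of `d`. -/
def BlockData.Dominated (d' d : BlockData) : Prop :=
  SubSpread d'.minima d.minima ∧ (#d.minima ≤ #d'.minima → SubSpread d'.last d.last)

namespace BlockData.Dominated

variable {G : Set (Finset ℕ)} {d d' : BlockData} {a b : ℕ}

theorem extend_right (h : d'.Dominated d) (b : ℕ) : d'.Dominated (d.extend b) :=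
  ⟨h.1, fun hcard => (h.2 hcard).trans (.of_subset (Finset.subset_insert b d.last))⟩

theorem card_minima_lt_startNew (h : d'.Dominated d) (hb : b ∉ d.minima) :
    #d'.minima < #(d.startNew b).minima := by
  rw [startNew, Finset.card_insert_of_notMem hb]
  exact Nat.lt_succ_of_le h.1.card_le

theorem startNew_right (h : d'.Dominated d) (hb : b ∉ d.minima) : d'.Dominated (d.startNew b) :=
  ⟨h.1.trans (.of_subset (Finset.subset_insert b d.minima)),
    fun hcard => absurd hcard (h.card_minima_lt_startNew hb).not_ge⟩

theorem extend_startNew (h : d'.Dominated d) (a : ℕ) (hb : b ∉ d.minima) :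
    (d'.extend a).Dominated (d.startNew b) :=
  ⟨(h.startNew_right hb).1, fun hcard => absurd hcard (h.card_minima_lt_startNew hb).not_ge⟩

theorem greedyStep_startNew (h : d'.Dominated d) (ha : a ∉ d'.minima) (hb : b ∉ d.minima)
    (hba : b ≤ a) : (greedyStep G a d').Dominated (d.startNew b) := by
  obtain ⟨-, -, hstep⟩ | ⟨-, hstep⟩ := greedyStep_cases G a d' <;> rw [hstep]
  · exact h.extend_startNew a hb
  · exact ⟨h.1.insert ha hb hba, fun _ => .singleton hba⟩

/-- If the greedy procedure opens a block where `d` does not, it had strictly fewer blocks so far: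
with equally many, its last block plus `a` would be a sub-spread of a member of `G`. -/
theorem greedyStep_extend (hG : SubSpreadClosed G) (h : d'.Dominated d)
    (ha : IsAbove a d'.support) (hb : IsAbove b d.support) (hba : b ≤ a)
    (hmem : insert b d.last ∈ G) (hne : #d.minima ≤ #d'.minima → d'.last.Nonempty) :
    (greedyStep G a d').Dominated (d.extend b) := by
  have haM : IsAbove a d'.minima := ha.anti Finset.subset_union_left
  have hlast (hcard : #d.minima ≤ #d'.minima) :
      SubSpread (insert a d'.last) (insert b d.last) :=
    (h.2 hcard).insert (ha.anti Finset.subset_union_right).notMem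
      (hb.anti Finset.subset_union_right).notMem hba
  obtain ⟨-, -, hstep⟩ | ⟨hforced, hstep⟩ := greedyStep_cases G a d' <;> rw [hstep]
  · exact ⟨h.1, hlast⟩
  · have hcard : #d'.minima < #d.minima := by
      by_contra! hcard
      exact hforced (hne hcard) (hG _ hmem _ (hlast hcard))
    refine ⟨h.1.insert_left haM.notMem
      ((hb.anti Finset.subset_union_left).mono hba) hcard, fun _ => ?_⟩
    exact (SubSpread.singleton hba).trans (.of_subset (by simp [extend]))

end BlockData.Dominated

/-- No matter how `E` is replaced by a sub-spread, its greedy decomposition is dominated by `d`. -/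
def DominatesGreedy (G : Set (Finset ℕ)) (E : Finset ℕ) (d : BlockData) : Prop :=
  ∀ E', SubSpread E' E → (greedy G E').Dominated d

namespace DominatesGreedy

variable {G : Set (Finset ℕ)} {E : Finset ℕ} {d : BlockData} {b : ℕ}

theorem empty (G : Set (Finset ℕ)) : DominatesGreedy G ∅ ⟨∅, ∅⟩ := by
  intro E' hE'
  obtain rfl : E' = ∅ := by simpa using hE'.card_le
  rw [greedy_empty]
  exact ⟨.refl ∅, fun _ => .refl ∅⟩

theorem startNew (h : DominatesGreedy G E d) (hd : d.support ⊆ E) (hb : IsAbove b E) :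
    DominatesGreedy G (insert b E) (d.startNew b) := by
  have hbM : b ∉ d.minima := (hb.anti (Finset.subset_union_left.trans hd)).notMem
  intro E' hE'
  obtain hE' | ⟨a, A, ha, rfl, hA, hba⟩ := hE'.insert_cases hb
  · exact (h E' hE').startNew_right hbM
  · have haM : IsAbove a (greedy G A).minima :=
      ha.anti (Finset.subset_union_left.trans (support_greedy_subset G A))
    exact greedy_insert ha ▸ (h A hA).greedyStep_startNew haM.notMem hbM hba

theorem extend (hG : SubSpreadClosed G) (h : DominatesGreedy G E d) (hd : d.support ⊆ E)
    (hb : IsAbove b E) (hne : d.minima.Nonempty) (hmem : insert b d.last ∈ G) :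
    DominatesGreedy G (insert b E) (d.extend b) := by
  intro E' hE'
  obtain hE' | ⟨a, A, ha, rfl, hA, hba⟩ := hE'.insert_cases hb
  · exact (h E' hE').extend_right b
  · have hA_sub := support_greedy_subset G A
    have hlast (hcard : #d.minima ≤ #(greedy G A).minima) : (greedy G A).last.Nonempty :=
      greedy_last_nonempty ((Finset.card_pos.1 (hne.card_pos.trans_le hcard)).mono
        (Finset.subset_union_left.trans hA_sub))
    exact greedy_insert ha ▸
      (h A hA).greedyStep_extend hG (ha.anti hA_sub) (hb.anti hd) hba hmem hlast

theorem append (hG : SubSpreadClosed G) (h : DominatesGreedy G E d) (hd : d.support ⊆ E)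
    {P : Finset ℕ} (hP : P.Nonempty) (hPG : P ∈ G) (hEP : FinsetLT E P) :
    DominatesGreedy G (E ∪ P) ⟨insert (P.min' hP) d.minima, P⟩ := by
  induction P using Finset.induction_on_max with
  | empty => simp at hP
  | insert b P hb ih =>
    have hbE : IsAbove b E := fun x hx => hEP x hx b (Finset.mem_insert_self b P)
    obtain rfl | hP' := P.eq_empty_or_nonempty
    · simpa [BlockData.startNew] using h.startNew hd hbE
    · have hprev := ih hP' (hG.mem_of_subset hPG (Finset.subset_insert b P))
        fun x hx y hy => hEP x hx y (Finset.mem_insert_of_mem hy)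
      have hsupport : insert (P.min' hP') d.minima ∪ P ⊆ E ∪ P := by
        have hmin := P.min'_mem hP'
        have hM : d.minima ⊆ E := Finset.subset_union_left.trans hd
        grind
      have hbEP : IsAbove b (E ∪ P) := fun x hx =>
        (Finset.mem_union.1 hx).elim (hbE x) (hb x)
      rw [Finset.union_insert, min'_insert_of_isAbove hP' hb]
      exact hprev.extend hG hsupport hbEP (Finset.insert_nonempty _ _) hPG

end DominatesGreedy

theorem IsDecomp.dominatesGreedy {G : Set (Finset ℕ)} {E : Finset ℕ} {d : BlockData}
    (h : IsDecomp G E d) (hG : SubSpreadClosed G) : DominatesGreedy G E d := by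
  induction h with
  | empty => exact .empty G
  | append hd hP hPG hEP ih => exact ih.append hG hd.support_subset hP hPG hEP

section Bracket

variable {F G : Set (Finset ℕ)}

theorem mem_bracketFam_iff (hF : SubSpreadClosed F) (hG : SubSpreadClosed G) (hempty : ∅ ∈ F)
    {E : Finset ℕ} :
    E ∈ bracketFam F G ↔ (∀ x ∈ E, {x} ∈ G) ∧ (greedy G E).minima ∈ F := by
  rw [mem_bracketFam_iff_exists_isDecomp hempty]
  constructor
  · rintro ⟨d, hd, hM⟩
    exact ⟨hd.singleton_mem hG.hereditary, hF _ hM _ (hd.dominatesGreedy hG E (.refl E)).1⟩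
  · rintro ⟨hE, hM⟩
    exact ⟨_, isDecomp_greedy hE, hM⟩

theorem subSpreadClosed_bracketFam (hF : SubSpreadClosed F) (hG : SubSpreadClosed G)
    (hempty : ∅ ∈ F) : SubSpreadClosed (bracketFam F G) := by
  intro B hB A hAB
  obtain ⟨d, hd, hM⟩ := (mem_bracketFam_iff_exists_isDecomp hempty).1 hB
  exact (mem_bracketFam_iff hF hG hempty).2
    ⟨hG.singleton_mem_of_subSpread hAB (hd.singleton_mem hG.hereditary),
      hF _ hM _ (hd.dominatesGreedy hG A hAB).1⟩

end Bracket

/-! ### The rank of the bracket -/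

section BracketRank

universe u

variable {F G : Set (Finset ℕ)} [IsWellFounded (Finset ℕ) (Extends F)]
  [IsWellFounded (Finset ℕ) (Extends G)] {d : BlockData} {m : ℕ} {ξ : Ordinal.{u}}

/-- The rank in `F[G]` of a set with greedy decomposition `d`: `extRank G ∅` for each unit of rank
left in `F` for new blocks, plus what the last block leaves in `G`. An empty last block means that
no block has been opened, so it contributes nothing. -/
noncomputable def bracketRank (F G : Set (Finset ℕ)) [IsWellFounded (Finset ℕ) (Extends F)]
    [IsWellFounded (Finset ℕ) (Extends G)] (d : BlockData) : Ordinal.{u} :=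
  extRank G ∅ * extRank F d.minima + if d.last = ∅ then 0 else extRank G d.last

theorem bracketRank_of_last_nonempty (h : d.last.Nonempty) :
    bracketRank.{u} F G d = extRank G ∅ * extRank F d.minima + extRank G d.last := by
  rw [bracketRank, if_neg h.ne_empty]

theorem bracketRank_extend (d : BlockData) (m : ℕ) :
    bracketRank.{u} F G (d.extend m) =
      extRank G ∅ * extRank F d.minima + extRank G (insert m d.last) :=
  bracketRank_of_last_nonempty (Finset.insert_nonempty m d.last)

theorem bracketRank_startNew (d : BlockData) (m : ℕ) :
    bracketRank.{u} F G (d.startNew m) =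
      extRank G ∅ * extRank F (insert m d.minima) + extRank G {m} :=
  bracketRank_of_last_nonempty (Finset.singleton_nonempty m)

theorem bracketRank_startNew_lt (hm : IsAbove m d.minima) (hmG : {m} ∈ G)
    (hmF : insert m d.minima ∈ F) : bracketRank.{u} F G (d.startNew m) < bracketRank F G d := by
  have hF : extRank.{u} F (insert m d.minima) < extRank F d.minima :=
    extRank_lt_of_extends ⟨m, hm, rfl, hmF⟩
  have hG : extRank.{u} G {m} < extRank G ∅ :=
    extRank_lt_of_extends ⟨m, by simp [IsAbove], rfl, hmG⟩
  calc bracketRank F G (d.startNew m)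
      = extRank G ∅ * extRank F (insert m d.minima) + extRank G {m} := bracketRank_startNew d m
    _ < extRank G ∅ * extRank F (insert m d.minima) + extRank G ∅ := by gcongr
    _ = extRank G ∅ * (extRank F (insert m d.minima) + 1) := (mul_add_one _ _).symm
    _ ≤ extRank G ∅ * extRank F d.minima := by gcongr; exact Order.add_one_le_of_lt hF
    _ ≤ bracketRank F G d := le_self_add

theorem bracketRank_greedyStep_lt (hm : IsAbove m d.support) (hmG : {m} ∈ G)
    (hmF : (greedyStep G m d).minima ∈ F) :
    bracketRank.{u} F G (greedyStep G m d) < bracketRank F G d := by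
  obtain ⟨hne, hmem, hstep⟩ | ⟨-, hstep⟩ := greedyStep_cases G m d <;> rw [hstep] at hmF ⊢
  · have hlast : extRank.{u} G (insert m d.last) < extRank G d.last :=
      extRank_lt_of_extends ⟨m, hm.anti Finset.subset_union_right, rfl, hmem⟩
    rw [bracketRank_extend, bracketRank_of_last_nonempty hne]
    gcongr
  · exact bracketRank_startNew_lt (hm.anti Finset.subset_union_left) hmG hmF

theorem eventually_le_bracketRank_startNew (hF : SubSpreadClosed F) (hG : SubSpreadClosed G)
    (h : ξ < extRank G ∅ * extRank F d.minima) :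
    ∀ᶠ m in Filter.atTop, {m} ∈ G ∧ insert m d.minima ∈ F ∧
      ξ ≤ bracketRank F G (d.startNew m) := by
  have hpos : extRank.{u} G ∅ ≠ 0 := by
    intro hzero
    simp [hzero] at h
  have hdiv : ξ / extRank G ∅ < extRank F d.minima := (Ordinal.lt_mul_iff_div_lt hpos).1 h
  have hmod : ξ % extRank G ∅ < extRank G ∅ := Ordinal.mod_lt ξ hpos
  filter_upwards [eventually_extends hF hdiv, eventually_extends hG hmod]
    with m ⟨hmF, hrankF⟩ ⟨hmG, hrankG⟩
  refine ⟨hmG, hmF, ?_⟩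
  calc ξ = extRank G ∅ * (ξ / extRank G ∅) + ξ % extRank G ∅ := (Ordinal.div_add_mod _ _).symm
    _ ≤ extRank G ∅ * extRank F (insert m d.minima) + extRank G {m} := by
      gcongr
      exact hrankG
    _ = bracketRank F G (d.startNew m) := (bracketRank_startNew d m).symm

theorem eventually_le_bracketRank_greedyStep (hF : SubSpreadClosed F) (hG : SubSpreadClosed G)
    (hM : d.minima ∈ F) (h : ξ < bracketRank F G d) :
    ∀ᶠ m in Filter.atTop, {m} ∈ G ∧ (greedyStep G m d).minima ∈ F ∧
      ξ ≤ bracketRank F G (greedyStep G m d) := by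
  rcases lt_or_ge ξ (extRank G ∅ * extRank F d.minima) with hlt | hge
  · filter_upwards [eventually_le_bracketRank_startNew hF hG hlt] with m ⟨hmG, hmF, hrank⟩
    refine ⟨hmG, ?_⟩
    obtain ⟨-, -, hstep⟩ | ⟨-, hstep⟩ := greedyStep_cases G m d <;> rw [hstep]
    · exact ⟨hM, hlt.le.trans (by rw [bracketRank_extend]; exact le_self_add)⟩
    · exact ⟨hmF, hrank⟩
  · obtain ⟨δ, rfl⟩ := exists_add_of_le hge
    have hne : d.last.Nonempty := by
      rw [Finset.nonempty_iff_ne_empty]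
      intro hlast
      simp [bracketRank, hlast] at h
    rw [bracketRank_of_last_nonempty hne] at h
    filter_upwards [eventually_extends hG (lt_of_add_lt_add_left h)] with m ⟨hmem, hrank⟩
    have hstep : greedyStep G m d = d.extend m := if_pos ⟨hne, hmem⟩
    rw [hstep, bracketRank_extend]
    exact ⟨hG.mem_of_subset hmem (by simp), hM, by gcongr⟩

theorem bracketRank_greedy_lt_of_extends (hF : SubSpreadClosed F) (hG : SubSpreadClosed G)
    (hempty : ∅ ∈ F) {E E' : Finset ℕ} (h : Extends (bracketFam F G) E' E) :
    bracketRank.{u} F G (greedy G E') < bracketRank F G (greedy G E) := by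
  obtain ⟨m, hm, rfl, hmem⟩ := h
  obtain ⟨hsingle, hmF⟩ := (mem_bracketFam_iff hF hG hempty).1 hmem
  rw [greedy_insert hm] at hmF ⊢
  exact bracketRank_greedyStep_lt (hm.anti (support_greedy_subset G E))
    (hsingle m (Finset.mem_insert_self m E)) hmF

theorem exists_extends_le_bracketRank_greedy (hF : SubSpreadClosed F) (hG : SubSpreadClosed G)
    (hempty : ∅ ∈ F) {E : Finset ℕ} (hE : E ∈ bracketFam F G)
    (h : ξ < bracketRank F G (greedy G E)) :
    ∃ E', Extends (bracketFam F G) E' E ∧ ξ ≤ bracketRank F G (greedy G E') := by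
  obtain ⟨hsingle, hM⟩ := (mem_bracketFam_iff hF hG hempty).1 hE
  obtain ⟨m, hm, hmG, hmF, hrank⟩ := ((eventually_isAbove E).and
    (eventually_le_bracketRank_greedyStep hF hG hM h)).exists
  rw [← greedy_insert hm] at hmF hrank
  exact ⟨insert m E, ⟨m, hm, rfl, (mem_bracketFam_iff hF hG hempty).2
    ⟨Finset.forall_mem_insert _ _ _ |>.2 ⟨hmG, hsingle⟩, hmF⟩⟩, hrank⟩

theorem isWellFounded_extends_bracketFam (hF : SubSpreadClosed F) (hG : SubSpreadClosed G)
    (hempty : ∅ ∈ F) : IsWellFounded (Finset ℕ) (Extends (bracketFam F G)) :=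
  ⟨Subrelation.wf (bracketRank_greedy_lt_of_extends.{0} hF hG hempty)
    (InvImage.wf (fun E => bracketRank F G (greedy G E)) wellFounded_lt)⟩

theorem extRank_bracketFam [IsWellFounded (Finset ℕ) (Extends (bracketFam F G))]
    (hF : SubSpreadClosed F) (hG : SubSpreadClosed G) (hempty : ∅ ∈ F) {E : Finset ℕ}
    (hE : E ∈ bracketFam F G) :
    extRank.{u} (bracketFam F G) E = bracketRank F G (greedy G E) :=
  le_antisymm
    (extRank_le (φ := fun E => bracketRank F G (greedy G E))
      (fun _ _ => bracketRank_greedy_lt_of_extends hF hG hempty) E)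
    (le_extRank (φ := fun E => bracketRank F G (greedy G E))
      (fun _ hE _ => exists_extends_le_bracketRank_greedy hF hG hempty hE) hE)

theorem extRank_bracketFam_empty [IsWellFounded (Finset ℕ) (Extends (bracketFam F G))]
    (hF : SubSpreadClosed F) (hG : SubSpreadClosed G) (hempty : ∅ ∈ F) :
    extRank.{u} (bracketFam F G) ∅ = extRank G ∅ * extRank F ∅ := by
  rw [extRank_bracketFam hF hG hempty (.inl rfl), greedy_empty, bracketRank, if_pos rfl, add_zero]

end BracketRank

/-- If `F`, `G` are regular with Cantor–Bendixson indices `α+1` and `β+1`, then `F[G]`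
is regular with Cantor–Bendixson index `β·α + 1`. -/
theorem bracketFam_regular_CB {F G : Set (Finset ℕ)}
    (hF : RegularFam F) (hG : RegularFam G) (α β : Ordinal)
    (hα : CBfam F = α + 1) (hβ : CBfam G = β + 1) :
    RegularFam (bracketFam F G) ∧ CBfam (bracketFam F G) = β * α + 1 := by
  have hF_empty : ∅ ∈ F := empty_mem_of_CBfam_ne_zero hF.1 (hα ▸ Order.succ_ne_bot α)
  have hG_empty : ∅ ∈ G := empty_mem_of_CBfam_ne_zero hG.1 (hβ ▸ Order.succ_ne_bot β)
  obtain ⟨hF, _⟩ := regularFam_iff.1 hF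
  obtain ⟨hG, _⟩ := regularFam_iff.1 hG
  have hclosed := subSpreadClosed_bracketFam hF hG hF_empty
  have hwf := isWellFounded_extends_bracketFam hF hG hF_empty
  rw [CBfam_eq hF hF_empty, Order.add_one_inj] at hα
  rw [CBfam_eq hG hG_empty, Order.add_one_inj] at hβ
  refine ⟨regularFam_iff.2 ⟨hclosed, hwf⟩, ?_⟩
  rw [CBfam_eq hclosed (.inl rfl), extRank_bracketFam_empty hF hG hF_empty, hα, hβ]
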